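/- Every finite nonempty simple graph G without isolated vertices satisfies χ'_CF(G) ≤ 3⌈log₂ Δ(G)⌉ + 1, where Δ(G) denotes the maximum degree of G. -/

import Mathlib

open SimpleGraph

/-- An edge `e` is *satisfied* by the colouring `c` of (the edges of) the graph `H` if some
colour is assigned by `c` to exactly one edge of `H` incident to an endpoint of `e`. -/
def CFSatisfies {V : Type*} {k : ℕ} (H : SimpleGraph V) (c : Sym2 V → Fin k) (e : Sym2 V) :
    Prop :=
  ∃ col : Fin k, ∃! f : Sym2 V, f ∈ H.edgeSet ∧ (∃ x ∈ e, x ∈ f) ∧ c f = col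

/-- The conflict-free chromatic index `χ'_CF(G)`: the least `k` such that `G` admits an edge
colouring with `k` colours in which every edge of `G` is satisfied. -/
noncomputable def cfChromIndex {V : Type*} (G : SimpleGraph V) : ℕ :=
  sInf {k | ∃ c : Sym2 V → Fin k, ∀ e ∈ G.edgeSet, CFSatisfies G c e}

/-- The parameter `χ'_sCF(G)`: the least `k` for which some subgraph `H` of `G` admits an edge
colouring with `k` colours such that every edge of `G` is satisfied. -/
noncomputable def scfChromIndex {V : Type*} (G : SimpleGraph V) : ℕ :=
  sInf {k | ∃ H : SimpleGraph V, H ≤ G ∧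
    ∃ c : Sym2 V → Fin k, ∀ e ∈ G.edgeSet, CFSatisfies H c e}

namespace CFProof

open Classical in
/-- Indicator that `uw` is a bad ordered pair for the configuration `(p, f)`. -/
noncomputable def bad {V : Type*} (G : SimpleGraph V) (p : V → V) (f : V → Fin 4) (u w : V) : ℕ :=
  if G.Adj u w ∧ f u = f w ∧ p u ≠ w then 1 else 0

/-- `p` encodes a matching, `f` a colouring of its edges (0 = unmatched vertices). -/
structure Valid {V : Type*} (G : SimpleGraph V) (p : V → V) (f : V → Fin 4) : Prop where
  inv : ∀ v, p (p v) = v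
  cls : ∀ v, f (p v) = f v
  zero : ∀ v, f v = 0 → p v = v
  adj : ∀ v, f v ≠ 0 → G.Adj v (p v)

lemma bad_symm {V : Type*} {G : SimpleGraph V} {p : V → V} {f : V → Fin 4}
    (h : Valid G p f) (u w : V) : bad G p f u w = bad G p f w u := by
  unfold bad
  have h1 : p u = w ↔ p w = u := by
    constructor
    · rintro rfl; exact h.inv u
    · rintro rfl; exact h.inv w
  have : (G.Adj u w ∧ f u = f w ∧ p u ≠ w) ↔ (G.Adj w u ∧ f w = f u ∧ p w ≠ u) := by
    rw [G.adj_comm u w, eq_comm (a := f u), ne_eq, ne_eq, h1]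
  classical
  by_cases hc : G.Adj u w ∧ f u = f w ∧ p u ≠ w
  · rw [if_pos hc, if_pos (this.1 hc)]
  · rw [if_neg hc, if_neg (fun h' => hc (this.2 h'))]

lemma sum_split {V : Type*} [Fintype V] [DecidableEq V] (g : V → ℕ) {x y : V} (hxy : x ≠ y) :
    ∑ u, g u = ∑ u ∈ Finset.univ \ {x, y}, g u + (g x + g y) := by
  rw [← Finset.sum_pair hxy]
  exact (Finset.sum_sdiff (Finset.subset_univ _)).symm

lemma sum_sum_split {V : Type*} [Fintype V] [DecidableEq V] (b : V → V → ℕ)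
    (hb : ∀ u w, b u w = b w u) {x y : V} (hxy : x ≠ y) :
    ∑ u, ∑ w, b u w = ∑ u ∈ Finset.univ \ {x, y}, ∑ w ∈ Finset.univ \ {x, y}, b u w
      + 2 * ∑ w ∈ Finset.univ \ {x, y}, (b x w + b y w)
      + (b x x + b x y + b y x + b y y) := by
  have h : ∀ u, ∑ w, b u w = ∑ w ∈ Finset.univ \ {x, y}, b u w + (b x u + b y u) := by
    intro u
    rw [sum_split (b u) hxy, hb u x, hb u y]
  rw [sum_split (fun u => ∑ w, b u w) hxy]
  simp only [h, Finset.sum_add_distrib]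
  ring

open Classical in
/-- Modified configuration: the adjacent pair `x, y` is moved to class `j`. -/
noncomputable def newP {V : Type*} (p : V → V) (x y : V) (j : Fin 4) (v : V) : V :=
  if v = x then (if j = 0 then x else y) else if v = y then (if j = 0 then y else x) else p v

open Classical in
noncomputable def newF {V : Type*} (f : V → Fin 4) (x y : V) (j : Fin 4) (v : V) : Fin 4 :=
  if v = x ∨ v = y then j else f v

lemma valid_new {V : Type*} {G : SimpleGraph V} {p : V → V} {f : V → Fin 4}
    (h : Valid G p f) {x y : V} (hxy : G.Adj x y)
    (hp : ∀ v, v ≠ x → v ≠ y → p v ≠ x ∧ p v ≠ y) (j : Fin 4) :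
    Valid G (newP p x y j) (newF f x y j) := by
  have hne := hxy.ne
  have hyx := hxy.symm
  constructor
  · intro v
    have := hp v
    have := h.inv v
    unfold newP
    grind
  · intro v
    have := hp v
    have := h.cls v
    unfold newP newF
    grind
  · intro v
    have := h.zero v
    unfold newP newF
    grind
  · intro v
    have := h.adj v
    unfold newP newF
    grind

open Classical in
lemma step_min {V : Type*} [Fintype V] (G : SimpleGraph V) (d : ℕ) (hd : 1 ≤ d)
    (hG : ∀ v, ∑ w, (if G.Adj v w then 1 else 0) ≤ 2 * d) :
    ∃ p f, Valid G p f ∧ ∀ v, ∑ w, bad G p f v w < d := by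
  let S := {s : (V → V) × (V → Fin 4) // Valid G s.1 s.2}
  have : Nonempty S := ⟨⟨(id, fun _ => 0), by constructor <;> simp⟩⟩
  obtain ⟨⟨⟨p, f⟩, hv⟩, hmin⟩ := Finite.exists_min
    (fun s : S => ∑ u, ∑ w, bad G s.1.1 s.1.2 u w)
  refine ⟨p, f, hv, fun x => ?_⟩
  replace hmin : ∀ p' f', Valid G p' f' →
      ∑ u, ∑ w, bad G p f u w ≤ ∑ u, ∑ w, bad G p' f' u w :=
    fun p' f' h' => hmin ⟨(p', f'), h'⟩
  simp only at hv
  by_cases hz : ∀ w, bad G p f x w = 0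
  · simp [hz]; omega
  -- a partner for x
  obtain ⟨y, hxy, hfy, hpx, hpy⟩ : ∃ y, G.Adj x y ∧ f x = f y ∧
      p x = (if f x = 0 then x else y) ∧ p y = (if f x = 0 then y else x) := by
    by_cases h0 : f x = 0
    · push Not at hz
      obtain ⟨w, hw⟩ := hz
      have hw' : G.Adj x w ∧ f x = f w ∧ p x ≠ w := by
        by_contra hc
        exact hw (by simp [bad, hc])
      refine ⟨w, hw'.1, hw'.2.1, ?_, ?_⟩
      · simp [h0, hv.zero x h0]
      · simp [h0, hv.zero w (hw'.2.1 ▸ h0)]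
    · exact ⟨p x, hv.adj x h0, (hv.cls x).symm, by simp [h0], by simp [h0, hv.inv x]⟩
  have hne := hxy.ne
  have hp : ∀ v, v ≠ x → v ≠ y → p v ≠ x ∧ p v ≠ y := by
    intro v h1 h2
    have := hv.inv v
    grind
  have hcur : newP p x y (f x) = p ∧ newF f x y (f x) = f := by
    constructor
    · funext v; unfold newP; grind
    · funext v; unfold newF; grind
  let R := Finset.univ \ ({x, y} : Finset V)
  let N : Fin 4 → ℕ := fun j => ∑ w ∈ R,
    ((if G.Adj x w ∧ f w = j then 1 else 0) + (if G.Adj y w ∧ f w = j then 1 else 0))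
  let K := ∑ u ∈ R, ∑ w ∈ R, bad G p f u w
  have hR : ∀ w ∈ R, w ≠ x ∧ w ≠ y := by
    intro w hw
    simpa [R] using hw
  have hT : ∀ j, ∑ u, ∑ w, bad G (newP p x y j) (newF f x y j) u w =
      K + 2 * (N j + if j = 0 then 1 else 0) := by
    intro j
    rw [sum_sum_split _ (bad_symm (valid_new hv hxy hp j)) hne]
    have e1 : ∑ u ∈ R, ∑ w ∈ R, bad G (newP p x y j) (newF f x y j) u w = K := by
      refine Finset.sum_congr rfl fun u hu => Finset.sum_congr rfl fun w hw => ?_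
      have := hR u hu
      have := hR w hw
      simp [bad, newP, newF, *]
    have e2 : ∑ w ∈ R, (bad G (newP p x y j) (newF f x y j) x w +
        bad G (newP p x y j) (newF f x y j) y w) = N j := by
      refine Finset.sum_congr rfl fun w hw => ?_
      have := hR w hw
      unfold bad newP newF
      grind
    have e3 : bad G (newP p x y j) (newF f x y j) x x = 0 := by simp [bad]
    have e4 : bad G (newP p x y j) (newF f x y j) y y = 0 := by simp [bad]
    have e5 : bad G (newP p x y j) (newF f x y j) x y = if j = 0 then 1 else 0 := by
      unfold bad newP newF
      grind
    have e6 : bad G (newP p x y j) (newF f x y j) y x = if j = 0 then 1 else 0 := by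
      rw [← bad_symm (valid_new hv hxy hp j), e5]
    change ∑ u ∈ R, ∑ w ∈ R, _ + 2 * ∑ w ∈ R, _ + _ = _
    rw [e1, e2, e3, e4, e5, e6]
    ring
  have hle : ∀ j, N (f x) + (if f x = 0 then 1 else 0) ≤ N j + if j = 0 then 1 else 0 := by
    intro j
    have h1 := hmin _ _ (valid_new hv hxy hp j)
    have h2 := hT (f x)
    rw [hcur.1, hcur.2] at h2
    rw [h2, hT j] at h1
    omega
  have hsum : ∑ j, N j + 2 ≤ 2 * d + 2 * d := by
    have h1 := hG x
    have h2 := hG y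
    rw [sum_split _ hne] at h1 h2
    simp only [hxy, hxy.symm, SimpleGraph.irrefl, if_true, if_false] at h1 h2
    have : ∑ j, N j = ∑ w ∈ R, (if G.Adj x w then 1 else 0) +
        ∑ w ∈ R, (if G.Adj y w then 1 else 0) := by
      simp only [N]
      rw [Finset.sum_comm, ← Finset.sum_add_distrib]
      refine Finset.sum_congr rfl fun w _ => ?_
      rw [Finset.sum_add_distrib]
      simp only [ite_and]
      congr 1 <;> split_ifs <;> simp
    simp only [R] at this
    omega
  have hdeg : ∑ w, bad G p f x w ≤ N (f x) + (if f x = 0 then 1 else 0) := by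
    rw [sum_split _ hne, add_comm (bad G p f x x)]
    have : bad G p f x x = 0 := by simp [bad]
    rw [this, add_zero]
    refine add_le_add (Finset.sum_le_sum fun w hw => ?_) ?_
    · unfold bad; grind
    · unfold bad; grind
  have a0 := hle 0
  have a1 := hle 1
  have a2 := hle 2
  have a3 := hle 3
  rw [Fin.sum_univ_four] at hsum
  simp at a0 a1 a2 a3
  omega

/-- Partial conflict-free colouring with colours `1..n`, with `0` meaning uncoloured. -/
def Q {V : Type*} (G : SimpleGraph V) (n : ℕ) : Prop :=
  ∃ c : Sym2 V → ℕ, (∀ e, c e ≤ n) ∧ (∀ e, c e ≠ 0 → e ∈ G.edgeSet) ∧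
    ∀ e ∈ G.edgeSet, ∃ f, c f ≠ 0 ∧ (∃ x ∈ e, x ∈ f) ∧
      ∀ g, (∃ x ∈ e, x ∈ g) → c g = c f → g = f

open Classical in
lemma step {V : Type*} [Fintype V] (n d : ℕ) (hd : 1 ≤ d)
    (ih : ∀ B : SimpleGraph V, (∀ v, ∑ w, (if B.Adj v w then 1 else 0) < d) → Q B n)
    (G : SimpleGraph V)
    (hG : ∀ v, ∑ w, (if G.Adj v w then 1 else 0) ≤ 2 * d) : Q G (n + 3) := by
  obtain ⟨p, f, hv, hb⟩ := step_min G d hd hG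
  let B : SimpleGraph V :=
    { Adj := fun u w => G.Adj u w ∧ f u = f w ∧ p u ≠ w
      symm := ⟨by
        rintro u w ⟨h1, h2, h3⟩
        refine ⟨h1.symm, h2.symm, ?_⟩
        rintro rfl
        exact h3 (hv.inv w)⟩
      loopless := ⟨fun u h => G.irrefl h.1⟩ }
  obtain ⟨c, hc1, hc2, hc3⟩ := ih B (fun v => by
    refine lt_of_eq_of_lt (Finset.sum_congr rfl fun w _ => ?_) (hb v)
    by_cases hc : B.Adj v w
    · rw [if_pos hc, bad, if_pos hc]
    · rw [if_neg hc, bad, if_neg hc])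
  -- colour of matching edges
  let M : Sym2 V → Prop := fun e => ∃ v, f v ≠ 0 ∧ e = s(v, p v)
  have hM : ∀ e, M e → ∃ j : ℕ, 1 ≤ j ∧ j ≤ 3 ∧ ∀ v ∈ e, e = s(v, p v) ∧ (f v : ℕ) = j := by
    rintro e ⟨v, hv0, rfl⟩
    refine ⟨f v, by have := Fin.val_ne_of_ne hv0; simp at this; omega, by omega, ?_⟩
    intro u hu
    rcases Sym2.mem_iff.1 hu with rfl | rfl
    · exact ⟨rfl, rfl⟩
    · rw [hv.inv, hv.cls]; exact ⟨Sym2.eq_swap, rfl⟩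
  choose! col hcol1 hcol3 hcol using hM
  have hMG : ∀ e, M e → e ∈ G.edgeSet := by
    rintro e ⟨v, hv0, rfl⟩
    exact hv.adj v hv0
  have hBG : ∀ e ∈ B.edgeSet, e ∈ G.edgeSet ∧ ¬ M e := by
    intro e
    induction e using Sym2.ind with
    | _ u w =>
      intro h
      have h : G.Adj u w ∧ f u = f w ∧ p u ≠ w := h
      refine ⟨h.1, fun hm => ?_⟩
      have := (hcol _ hm u (by simp)).1
      rw [Sym2.congr_right] at this
      exact h.2.2 this.symm
  let c' : Sym2 V → ℕ := fun e => if M e then n + col e else c e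
  have hkey : ∀ u w, f u ≠ 0 → (f w = f u → p u = w) →
      ∃ g, c' g ≠ 0 ∧ (∃ x ∈ s(u, w), x ∈ g) ∧
      ∀ g', (∃ x ∈ s(u, w), x ∈ g') → c' g' = c' g → g' = g := by
    intro u w hu hw
    have hMu : M s(u, p u) := ⟨u, hu, rfl⟩
    have h1 := hcol1 _ hMu
    have h2 := (hcol _ hMu u (by simp)).2
    refine ⟨s(u, p u), ?_, ⟨u, by simp, by simp⟩, ?_⟩
    · simp only [c', hMu, if_true]; omega
    · rintro g ⟨x, hx, hxg⟩ hg
      by_cases hMg : M g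
      · simp only [c', hMu, hMg, if_true] at hg
        have h3 := hcol _ hMg x hxg
        have hfx : f x = f u := Fin.ext (by omega)
        rcases Sym2.mem_iff.1 hx with rfl | rfl
        · exact h3.1
        · have := hw hfx
          rw [h3.1, ← this, hv.inv]; exact Sym2.eq_swap
      · simp only [c', hMu, hMg, if_true, if_false] at hg
        have := hc1 g
        omega
  refine ⟨c', ?_, ?_, ?_⟩
  · intro e
    have := hcol3 e
    have := hc1 e
    simp only [c']
    split_ifs with h
    · have := hcol3 e h; omega
    · omega
  · intro e he
    by_cases h : M e
    · exact hMG e h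
    · simp only [c', h, if_false] at he
      exact (hBG e (hc2 e he)).1
  · intro e he
    by_cases heB : e ∈ B.edgeSet
    · obtain ⟨g, hg0, hge, hgu⟩ := hc3 e heB
      have hMg := (hBG g (hc2 g hg0)).2
      refine ⟨g, by simpa [c', hMg] using hg0, hge, fun g' hg' hcc => ?_⟩
      by_cases hMg' : M g'
      · simp only [c', hMg, hMg', if_true, if_false] at hcc
        have := hc1 g
        have := hcol1 _ hMg'
        omega
      · simp only [c', hMg, hMg', if_false] at hcc
        exact hgu g' hg' hcc
    · induction e using Sym2.ind with
      | _ u w =>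
        have he : G.Adj u w := he
        have heB : ¬ (G.Adj u w ∧ f u = f w ∧ p u ≠ w) := heB
        by_cases hu : f u = 0
        · by_cases hw : f w = 0
          · exfalso
            apply heB
            refine ⟨he, by rw [hu, hw], ?_⟩
            rw [hv.zero u hu]; exact he.ne
          · have := hkey w u hw (fun h => absurd (h.symm.trans hu) hw)
            rwa [Sym2.eq_swap] at this
        · exact hkey u w hu (fun h => by by_contra h3; exact heB ⟨he, h.symm, h3⟩)

open Classical in
lemma main_lt {V : Type*} [Fintype V] (k : ℕ) : ∀ G : SimpleGraph V,
    (∀ v, ∑ w, (if G.Adj v w then 1 else 0) < 2 ^ k) → Q G (3 * k) := by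
  induction k with
  | zero =>
    intro G hG
    refine ⟨fun _ => 0, by simp, by simp, ?_⟩
    intro e
    induction e using Sym2.ind with
    | _ u w =>
      intro h
      have h : G.Adj u w := h
      have := hG u
      rw [pow_zero, Nat.lt_one_iff, Finset.sum_eq_zero_iff] at this
      have := this w (Finset.mem_univ w)
      simp [h] at this
  | succ k ih =>
    intro G hG
    exact step (3 * k) (2 ^ k) Nat.one_le_two_pow ih G
      (fun v => by have := hG v; rw [pow_succ] at this; omega)

end CFProof

open CFProof

/-- Every finite nonempty simple graph without isolated vertices satisfies
`χ'_CF(G) ≤ 3⌈log₂ Δ(G)⌉ + 1`. -/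
theorem cfChromIndex_le_three_clog_maxDegree_add_one {V : Type*} [Fintype V] [Nonempty V]
    (G : SimpleGraph V) [DecidableRel G.Adj] (hNoIso : ∀ v : V, ∃ w : V, G.Adj v w) :
    cfChromIndex G ≤ 3 * Nat.clog 2 G.maxDegree + 1 := by
  classical
  have hdeg : ∀ v, ∑ w, (if G.Adj v w then 1 else 0) ≤ G.maxDegree := by
    intro v
    refine le_trans (le_of_eq ?_) (G.degree_le_maxDegree v)
    rw [← G.card_neighborFinset_eq_degree, G.neighborFinset_eq_filter, Finset.card_filter]
  have hle := Nat.le_pow_clog (b := 2) (by norm_num) G.maxDegree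
  apply Nat.sInf_le
  rcases hk : Nat.clog 2 G.maxDegree with _ | k
  · rw [hk] at hle
    have huniq : ∀ a b b', G.Adj a b → G.Adj a b' → b = b' := by
      intro a b b' hb hb'
      by_contra hne
      have h := hdeg a
      rw [sum_split _ hne] at h
      simp only [hb, hb', if_true] at h
      simp at hle
      omega
    refine ⟨fun _ => 0, fun e he => ⟨0, e, ?_, ?_⟩⟩
    · induction e using Sym2.ind with
      | _ u w => exact ⟨he, ⟨u, by simp, by simp⟩, rfl⟩
    · rintro g ⟨hg, ⟨x, hxe, hxg⟩, -⟩
      obtain ⟨b, rfl⟩ := Sym2.mem_iff_exists.1 hxe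
      obtain ⟨b', rfl⟩ := Sym2.mem_iff_exists.1 hxg
      rw [huniq x b b' he hg]
  · rw [hk] at hle
    obtain ⟨c, hc1, hc2, hc3⟩ := step (3 * k) (2 ^ k) Nat.one_le_two_pow (main_lt k) G
      (fun v => by
        have h1 := hdeg v
        rw [pow_succ] at hle
        refine le_trans (le_of_eq ?_) (h1.trans (hle.trans (le_of_eq (mul_comm _ _))))
        refine Finset.sum_congr rfl fun w _ => ?_
        congr)
    refine ⟨fun e => ⟨c e, by have := hc1 e; omega⟩, fun e he => ?_⟩
    obtain ⟨f, hf0, hfe, hfu⟩ := hc3 e he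
    refine ⟨⟨c f, by have := hc1 f; omega⟩, f, ⟨hc2 f hf0, hfe, rfl⟩, ?_⟩
    rintro g ⟨-, hge, hgc⟩
    exact hfu g hge (by simpa using hgc)
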